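/- Let 1 < α ≤ 2, let m ≥ 1, and let A be the m×m WSGD Toeplitz matrix built from the weights w_k for either (p,q)=(1,0) or (p,q)=(1,-1) of order α. Let c₁, c₂ ≥ 0 with c₁² + c₂² ≠ 0. Then every complex eigenvalue λ of the matrix c₁ A + c₂ Aᵀ satisfies Re(λ) < 0. -/

import Mathlib

/-!
For a real vector `x`, extended by zero, with autocorrelations `r k = ∑ i, x i * x (i + k)`, the
quadratic form of the Toeplitz matrix is
`x ⬝ᵥ A *ᵥ x = w 0 * r 1 + ∑ k, w (k + 1) * r k`. It is unchanged when `A` is transposed, so for an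
eigenvector `x + i y` of `c₁ A + c₂ Aᵀ` with eigenvalue `lam` one gets
`lam.re * (|x|² + |y|²) = (c₁ + c₂) * (x ⬝ᵥ A *ᵥ x + y ⬝ᵥ A *ᵥ y)`, and it suffices that `A` has a
negative definite quadratic form.

Negative definiteness rests on three facts about autocorrelations: `r k ≤ r 0`, `r 1 < r 0` if
`x ≠ 0`, and `4 * r 1 - 3 * r 0 ≤ r 2` (the sum of the squared second differences of `x` is
nonnegative). The partial sums `w 0 + ⋯ + w n` are nonpositive for `n ≥ 3`, since
`g 0 + ⋯ + g n = -(n + 1) / α * g (n + 1)`, and `w k ≥ 0` for `k ≥ 4`.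
The weight `w 3` is nonnegative for `(p,q) = (1,0)`, but may be negative for `(1,-1)`; then the
bound on `r 2` trades `w 3 * r 2` for multiples of `r 0` and `r 1`. The coefficient of `r 1`
that remains is `w 0 + w 2 + 4 * w 3`, which is positive for `1 < α ≤ 2` (it vanishes at `α = 1`).
Bounding every remaining `r k` by `r 0` leaves `r 0` times a partial sum of the weights.
-/

open Matrix

/-- Grünwald coefficients `g_k = (-1)^k * binom(α, k)`. -/
noncomputable def gru (α : ℝ) (k : ℕ) : ℝ :=
  (-1 : ℝ) ^ k * (∏ i ∈ Finset.range k, (α - (i : ℝ))) / (Nat.factorial k : ℝ)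

/-- WSGD weights for `(p,q) = (1,0)`. -/
noncomputable def w10 (α : ℝ) : ℕ → ℝ
  | 0 => α / 2 * gru α 0
  | k + 1 => α / 2 * gru α (k + 1) + (2 - α) / 2 * gru α k

/-- WSGD weights for `(p,q) = (1,-1)`. -/
noncomputable def w1m1 (α : ℝ) : ℕ → ℝ
  | 0 => (2 + α) / 4 * gru α 0
  | 1 => (2 + α) / 4 * gru α 1
  | k + 2 => (2 + α) / 4 * gru α (k + 2) + (2 - α) / 4 * gru α k

/-- The m×m WSGD Toeplitz matrix: `A i j = w (i - j + 1)` when `i - j + 1 ≥ 0`, else `0`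
(0-based indices give the same entries as the 1-based description). -/
noncomputable def wsgdMatrix (w : ℕ → ℝ) (m : ℕ) : Matrix (Fin m) (Fin m) ℝ :=
  Matrix.of fun i j => if (j : ℕ) ≤ (i : ℕ) + 1 then w ((i : ℕ) + 1 - (j : ℕ)) else 0

/-! ### Grünwald coefficients and partial sums of the weights -/

section Grunwald

lemma gru_zero (α : ℝ) : gru α 0 = 1 := by simp [gru]

lemma gru_succ (α : ℝ) (k : ℕ) : ((k : ℝ) + 1) * gru α (k + 1) = (k - α) * gru α k := by
  have h : (Nat.factorial k : ℝ) ≠ 0 := by exact_mod_cast Nat.factorial_ne_zero k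
  have h2 : (k : ℝ) + 1 ≠ 0 := by positivity
  unfold gru
  rw [Finset.prod_range_succ, Nat.factorial_succ]
  push_cast
  field_simp
  ring

lemma gru_one (α : ℝ) : gru α 1 = -α := by
  have := gru_succ α 0
  simp [gru_zero] at this
  exact this

lemma gru_two (α : ℝ) : gru α 2 = α * (α - 1) / 2 := by
  have := gru_succ α 1
  norm_num [gru_one] at this
  linarith

lemma gru_three (α : ℝ) : gru α 3 = α * (α - 1) * (2 - α) / 6 := by
  have := gru_succ α 2
  norm_num [gru_two] at this
  linarith

lemma gru_nonneg {α : ℝ} (h1 : 1 < α) (h2 : α ≤ 2) (k : ℕ) : 0 ≤ gru α (k + 2) := by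
  induction k with
  | zero => rw [gru_two]; nlinarith
  | succ k ih =>
    have := gru_succ α (k + 2)
    push_cast at this
    have hk : (0 : ℝ) ≤ k := k.cast_nonneg
    have h3 : 0 ≤ ((k : ℝ) + 2 - α) * gru α (k + 2) := mul_nonneg (by linarith) ih
    rw [← this] at h3
    exact nonneg_of_mul_nonneg_right h3 (by positivity)

lemma gru_sum (α : ℝ) (n : ℕ) :
    -α * ∑ k ∈ Finset.range (n + 1), gru α k = (n + 1) * gru α (n + 1) := by
  induction n with
  | zero => simp [gru_zero, gru_one]
  | succ n ih =>
    rw [Finset.sum_range_succ, mul_add, ih]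
    have := gru_succ α (n + 1)
    push_cast at this ⊢
    linarith

lemma gru_sum_nonpos {α : ℝ} (h1 : 1 < α) (h2 : α ≤ 2) (n : ℕ) :
    ∑ k ∈ Finset.range (n + 2), gru α k ≤ 0 := by
  have h := gru_sum α (n + 1)
  have h3 := gru_nonneg h1 h2 n
  have h4 : 0 ≤ (((n + 1 : ℕ) : ℝ) + 1) * gru α (n + 1 + 1) := mul_nonneg (by positivity) h3
  rw [← h] at h4
  by_contra hc
  push Not at hc
  nlinarith [mul_pos (by linarith : 0 < α) hc]

lemma w10_sum (α : ℝ) (n : ℕ) : ∑ k ∈ Finset.range (n + 1), w10 α k =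
    α / 2 * ∑ k ∈ Finset.range (n + 1), gru α k +
      (2 - α) / 2 * ∑ k ∈ Finset.range n, gru α k := by
  rw [Finset.sum_range_succ', Finset.sum_range_succ' (gru α)]
  simp only [w10, Finset.sum_add_distrib, ← Finset.mul_sum]
  ring

lemma w1m1_sum (α : ℝ) (n : ℕ) : ∑ k ∈ Finset.range (n + 2), w1m1 α k =
    (2 + α) / 4 * ∑ k ∈ Finset.range (n + 2), gru α k +
      (2 - α) / 4 * ∑ k ∈ Finset.range n, gru α k := by
  rw [Finset.sum_range_succ', Finset.sum_range_succ', Finset.sum_range_succ' (gru α),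
    Finset.sum_range_succ' (fun k => gru α (k + 1))]
  simp only [w1m1, Finset.sum_add_distrib, ← Finset.mul_sum]
  ring

end Grunwald

/-! ### Autocorrelations and Toeplitz forms -/

section Autocorrelation

/-- The autocorrelation at lag `k` of a sequence supported on `{0, …, m - 1}`; terms with
`i + k ≥ m` vanish by the support condition. -/
def autocorr (m : ℕ) (X : ℕ → ℝ) (k : ℕ) : ℝ := ∑ i ∈ Finset.range m, X i * X (i + k)

lemma sum_shift {m : ℕ} {f : ℕ → ℝ} (hf : f m = 0) :
    ∑ i ∈ Finset.range m, f (i + 1) = ∑ i ∈ Finset.range m, f i - f 0 := by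
  have h1 := Finset.sum_range_succ' f m
  have h2 := Finset.sum_range_succ f m
  linarith

variable {m : ℕ} {X : ℕ → ℝ}

lemma sum_sq_shift_le (hX : ∀ i, m ≤ i → X i = 0) (k : ℕ) :
    ∑ i ∈ Finset.range m, X (i + k) ^ 2 ≤ ∑ i ∈ Finset.range m, X i ^ 2 := by
  induction k with
  | zero => simp
  | succ k ih =>
    have h := sum_shift (m := m) (f := fun i => X (i + k) ^ 2) (by simp [hX (m + k) (by omega)])
    have h2 : ∑ i ∈ Finset.range m, X (i + (k + 1)) ^ 2
        = ∑ i ∈ Finset.range m, X (i + 1 + k) ^ 2 :=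
      Finset.sum_congr rfl fun i _ => by rw [show i + (k + 1) = i + 1 + k by ring]
    rw [h2, h]
    have := sq_nonneg (X (0 + k))
    linarith

lemma autocorr_zero : autocorr m X 0 = ∑ i ∈ Finset.range m, X i ^ 2 :=
  Finset.sum_congr rfl fun i _ => by simp [sq]

lemma autocorr_le (hX : ∀ i, m ≤ i → X i = 0) (k : ℕ) : autocorr m X k ≤ autocorr m X 0 := by
  have h := sum_sq_shift_le hX k
  have h2 : 0 ≤ ∑ i ∈ Finset.range m, (X i - X (i + k)) ^ 2 :=
    Finset.sum_nonneg fun i _ => sq_nonneg _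
  have h3 : ∑ i ∈ Finset.range m, (X i - X (i + k)) ^ 2 = ∑ i ∈ Finset.range m, X i ^ 2
      - 2 * autocorr m X k + ∑ i ∈ Finset.range m, X (i + k) ^ 2 := by
    rw [autocorr, Finset.mul_sum, ← Finset.sum_sub_distrib, ← Finset.sum_add_distrib]
    exact Finset.sum_congr rfl fun i _ => by ring
  rw [autocorr_zero]
  linarith

lemma autocorr_one_lt (hX : ∀ i, m ≤ i → X i = 0) (hne : ∃ i, X i ≠ 0) :
    autocorr m X 1 < autocorr m X 0 := by
  have hs := sum_shift (m := m) (f := fun i => X i ^ 2) (by simp [hX m le_rfl])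
  have h3 : ∑ i ∈ Finset.range m, (X i - X (i + 1)) ^ 2 = ∑ i ∈ Finset.range m, X i ^ 2
      - 2 * autocorr m X 1 + ∑ i ∈ Finset.range m, X (i + 1) ^ 2 := by
    rw [autocorr, Finset.mul_sum, ← Finset.sum_sub_distrib, ← Finset.sum_add_distrib]
    exact Finset.sum_congr rfl fun i _ => by ring
  have h2 : 0 ≤ ∑ i ∈ Finset.range m, (X i - X (i + 1)) ^ 2 :=
    Finset.sum_nonneg fun i _ => sq_nonneg _
  by_contra hc
  push Not at hc
  rw [autocorr_zero] at hc
  -- Equality forces `X` to start at zero and to be constant.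
  have h0 : X 0 = 0 := by
    have : X 0 ^ 2 ≤ 0 := by linarith
    exact pow_eq_zero_iff two_ne_zero |>.1 (le_antisymm this (sq_nonneg _))
  have hz : ∑ i ∈ Finset.range m, (X i - X (i + 1)) ^ 2 = 0 := by
    have := sq_nonneg (X 0)
    linarith
  rw [Finset.sum_eq_zero_iff_of_nonneg fun i _ => sq_nonneg _] at hz
  have hall : ∀ i, X i = 0 := by
    intro i
    induction i with
    | zero => exact h0
    | succ i ih =>
      by_cases hi : i < m
      · have := pow_eq_zero_iff two_ne_zero |>.1 (hz i (Finset.mem_range.2 hi))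
        linarith
      · exact hX _ (by omega)
  obtain ⟨i, hi⟩ := hne
  exact hi (hall i)

/-- The sum of the squared second differences of `X` (including those at the left boundary) is
`6 * r 0 - 8 * r 1 + 2 * r 2`. -/
lemma autocorr_two_ge (hX : ∀ i, m ≤ i → X i = 0) :
    4 * autocorr m X 1 - 3 * autocorr m X 0 ≤ autocorr m X 2 := by
  have hs1 := sum_shift (m := m) (f := fun i => X i ^ 2) (by simp [hX m le_rfl])
  have hs2 := sum_shift (m := m) (f := fun i => X (i + 1) ^ 2) (by simp [hX (m + 1) (by omega)])
  have hs3 := sum_shift (m := m) (f := fun i => X i * X (i + 1)) (by simp [hX m le_rfl])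
  have h2 : 0 ≤ ∑ i ∈ Finset.range m, (X (i + 1 + 1) - 2 * X (i + 1) + X i) ^ 2 :=
    Finset.sum_nonneg fun i _ => sq_nonneg _
  have h3 : ∑ i ∈ Finset.range m, (X (i + 1 + 1) - 2 * X (i + 1) + X i) ^ 2 =
      ∑ i ∈ Finset.range m, X (i + 1 + 1) ^ 2 + 4 * ∑ i ∈ Finset.range m, X (i + 1) ^ 2
      + ∑ i ∈ Finset.range m, X i ^ 2 - 4 * ∑ i ∈ Finset.range m, X (i + 1) * X (i + 1 + 1)
      - 4 * autocorr m X 1 + 2 * autocorr m X 2 := by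
    simp only [autocorr, Finset.mul_sum, ← Finset.sum_sub_distrib, ← Finset.sum_add_distrib]
    exact Finset.sum_congr rfl fun i _ => by ring
  simp only [zero_add] at hs1 hs2 hs3
  have h1 : ∑ i ∈ Finset.range m, X i * X (i + 1) = autocorr m X 1 := rfl
  rw [autocorr_zero]
  nlinarith [sq_nonneg (X 1 - 2 * X 0), sq_nonneg (X 0)]

lemma toeplitz_form_eq (w : ℕ → ℝ) {N : ℕ} (hN : m ≤ N) (hX : ∀ i, m ≤ i → X i = 0) :
    ∑ i ∈ Finset.range m, ∑ j ∈ Finset.range m,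
        X i * ((if j ≤ i + 1 then w (i + 1 - j) else 0) * X j) =
      w 0 * autocorr m X 1 + ∑ k ∈ Finset.range N, w (k + 1) * autocorr m X k := by
  have hentry : ∀ i ∈ Finset.range m, ∀ j ∈ Finset.range m,
      X i * ((if j ≤ i + 1 then w (i + 1 - j) else 0) * X j) =
        (if i + 1 = j then w 0 * (X i * X j) else 0) +
        ∑ k ∈ Finset.range N, if j + k = i then w (k + 1) * (X j * X i) else 0 := by
    intro i hi j hj
    rw [Finset.mem_range] at hi hj
    rcases lt_trichotomy j (i + 1) with h | h | h
    · obtain ⟨k, rfl⟩ : ∃ k, i = j + k := ⟨i - j, by omega⟩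
      rw [Finset.sum_eq_single k]
      · rw [if_pos (by omega), if_neg (by omega), if_pos rfl, show j + k + 1 - j = k + 1 by omega]
        ring
      · intro b _ hb
        rw [if_neg (by omega)]
      · intro hk
        exact absurd (Finset.mem_range.2 (by omega)) hk
    · rw [Finset.sum_eq_zero fun k _ => if_neg (by omega)]
      subst h
      simp
      ring
    · rw [Finset.sum_eq_zero fun k _ => if_neg (by omega), if_neg (by omega), if_neg (by omega)]
      ring
  rw [Finset.sum_congr rfl fun i hi => Finset.sum_congr rfl (hentry i hi)]
  simp only [Finset.sum_add_distrib]
  congr 1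
  · rw [autocorr, Finset.mul_sum]
    refine Finset.sum_congr rfl fun i _ => ?_
    rw [Finset.sum_ite_eq]
    split_ifs with h
    · rfl
    · rw [hX (i + 1) (by simpa using h)]; ring
  · rw [Finset.sum_comm, Finset.sum_congr rfl fun j _ => Finset.sum_comm, Finset.sum_comm]
    refine Finset.sum_congr rfl fun k _ => ?_
    rw [autocorr, Finset.mul_sum]
    refine Finset.sum_congr rfl fun j _ => ?_
    rw [Finset.sum_ite_eq]
    split_ifs with h
    · rfl
    · rw [hX (j + k) (by simpa using h)]; ring

/-- The parameter `d` is an upper bound for the negative part of `w 3`. -/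
lemma toeplitz_form_neg (w : ℕ → ℝ) (d : ℝ) (hd : 0 ≤ d) (h3 : 0 ≤ w 3 + d)
    (h02 : 0 < w 0 + w 2 - 4 * d) (hw : ∀ k, 0 ≤ w (k + 4))
    (hsum : ∀ n, ∑ k ∈ Finset.range (n + 4), w k ≤ 0)
    (hX : ∀ i, m ≤ i → X i = 0) (hne : ∃ i, X i ≠ 0) :
    ∑ i ∈ Finset.range m, ∑ j ∈ Finset.range m,
        X i * ((if j ≤ i + 1 then w (i + 1 - j) else 0) * X j) < 0 := by
  rw [toeplitz_form_eq w (N := m + 3) (by omega) hX]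
  have hs := hsum m
  rw [Finset.sum_range_succ', Finset.sum_range_succ', Finset.sum_range_succ',
    Finset.sum_range_succ'] at hs
  rw [Finset.sum_range_succ', Finset.sum_range_succ', Finset.sum_range_succ']
  simp only [add_assoc, zero_add, Nat.reduceAdd] at hs ⊢
  set r := autocorr m X
  have hr0 : 0 ≤ r 0 := by
    simp only [r, autocorr_zero]
    exact Finset.sum_nonneg fun i _ => sq_nonneg _
  have htail : ∑ k ∈ Finset.range m, w (k + 4) * r (k + 3)
      ≤ (∑ k ∈ Finset.range m, w (k + 4)) * r 0 := by
    rw [Finset.sum_mul]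
    exact Finset.sum_le_sum fun k _ => mul_le_mul_of_nonneg_left (autocorr_le hX _) (hw k)
  have e1 : (w 0 + w 2 - 4 * d) * r 1 < (w 0 + w 2 - 4 * d) * r 0 :=
    mul_lt_mul_of_pos_left (autocorr_one_lt hX hne) h02
  have e2 : (w 3 + d) * r 2 ≤ (w 3 + d) * r 0 := mul_le_mul_of_nonneg_left (autocorr_le hX 2) h3
  have e3 : d * (4 * r 1 - 3 * r 0) ≤ d * r 2 :=
    mul_le_mul_of_nonneg_left (autocorr_two_ge hX) hd
  have e4 := mul_nonpos_of_nonpos_of_nonneg hs hr0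
  nlinarith

end Autocorrelation

/-! ### Negative definiteness and eigenvalues -/

/-- The quadratic form of either WSGD matrix is negative definite. -/
lemma wsgd_form_neg {α : ℝ} (hα1 : 1 < α) (hα2 : α ≤ 2) {m : ℕ} {A : Matrix (Fin m) (Fin m) ℝ}
    (hA : A = wsgdMatrix (w10 α) m ∨ A = wsgdMatrix (w1m1 α) m) {x : Fin m → ℝ} (hx : x ≠ 0) :
    x ⬝ᵥ A *ᵥ x < 0 := by
  set X : ℕ → ℝ := fun i => if h : i < m then x ⟨i, h⟩ else 0
  have hX : ∀ i, m ≤ i → X i = 0 := fun i hi => dif_neg (by omega)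
  have hXx : ∀ i : Fin m, X i = x i := fun i => dif_pos i.2
  have hne : ∃ i, X i ≠ 0 := by
    obtain ⟨i, hi⟩ := Function.ne_iff.1 hx
    exact ⟨i, by rw [hXx]; exact hi⟩
  have hform : ∀ w : ℕ → ℝ, x ⬝ᵥ wsgdMatrix w m *ᵥ x =
      ∑ i ∈ Finset.range m, ∑ j ∈ Finset.range m,
        X i * ((if j ≤ i + 1 then w (i + 1 - j) else 0) * X j) := by
    intro w
    simp only [Finset.sum_range, hXx, dotProduct, mulVec, wsgdMatrix, Matrix.of_apply,
      Finset.mul_sum]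
  have hg := gru_nonneg hα1 hα2
  rcases hA with rfl | rfl
  · rw [hform]
    refine toeplitz_form_neg (w10 α) 0 le_rfl ?_ ?_ ?_ ?_ hX hne
    · have h2 := hg 0
      have h3 := hg 1
      simp only [w10]
      have := mul_nonneg (by linarith : 0 ≤ α / 2) h3
      have := mul_nonneg (by linarith : 0 ≤ (2 - α) / 2) h2
      simp only [zero_add, Nat.reduceAdd] at *
      linarith
    · simp only [w10, gru_zero, gru_one, gru_two, Nat.reduceAdd]
      nlinarith [mul_pos (by linarith : 0 < α) (by linarith : 0 < α - 1),
        mul_pos (mul_pos (by linarith : 0 < α) (by linarith : 0 < α - 1))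
          (by linarith : 0 < α + 2)]
    · intro k
      exact add_nonneg (mul_nonneg (by linarith) (hg (k + 2)))
        (mul_nonneg (by linarith) (hg (k + 1)))
    · intro n
      rw [w10_sum]
      have h1 := gru_sum_nonpos hα1 hα2 (n + 2)
      have h2 := gru_sum_nonpos hα1 hα2 (n + 1)
      exact add_nonpos (mul_nonpos_of_nonneg_of_nonpos (by linarith) h1)
        (mul_nonpos_of_nonneg_of_nonpos (by linarith) h2)
  · rw [hform]
    have hw3 : w1m1 α 3 = - ((2 - α) * α * (8 - α - α ^ 2) / 24) := by
      simp only [w1m1, gru_one, gru_three, Nat.reduceAdd]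
      ring
    refine toeplitz_form_neg (w1m1 α) (-w1m1 α 3) ?_ (by simp) ?_ ?_ ?_ hX hne
    · rw [hw3, neg_neg]
      have : 0 ≤ 8 - α - α ^ 2 := by nlinarith
      have : 0 ≤ (2 - α) * α := mul_nonneg (by linarith) (by linarith)
      positivity
    · rw [hw3]
      simp only [w1m1, gru_zero, gru_two, zero_add]
      have hq : 0 < -4 * α ^ 3 + 3 * α ^ 2 + 46 * α - 24 := by
        nlinarith [mul_nonneg (sq_nonneg α) (by linarith : 0 ≤ 2 - α)]
      -- The quantity to be bounded is `(α - 1)` times this cubic, divided by `24`.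
      have := mul_pos (by linarith : 0 < α - 1) hq
      nlinarith
    · intro k
      exact add_nonneg (mul_nonneg (by linarith) (hg (k + 2)))
        (mul_nonneg (by linarith) (hg k))
    · intro n
      rw [w1m1_sum α (n + 2)]
      have h1 := gru_sum_nonpos hα1 hα2 (n + 2)
      have h2 := gru_sum_nonpos hα1 hα2 n
      exact add_nonpos (mul_nonpos_of_nonneg_of_nonpos (by linarith) h1)
        (mul_nonpos_of_nonneg_of_nonpos (by linarith) h2)

/-- A complex eigenvalue of a real matrix with negative definite quadratic form has negative real
part. -/
lemma re_neg_of_form_neg {m : ℕ} {M : Matrix (Fin m) (Fin m) ℝ}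
    (hM : ∀ x : Fin m → ℝ, x ≠ 0 → x ⬝ᵥ M *ᵥ x < 0) {lam : ℂ} {v : Fin m → ℂ} (hv : v ≠ 0)
    (h : (M.map Complex.ofReal).mulVec v = lam • v) : lam.re < 0 := by
  set x : Fin m → ℝ := fun i => (v i).re with hx
  set y : Fin m → ℝ := fun i => (v i).im with hy
  have hre : M *ᵥ x = lam.re • x - lam.im • y := by
    funext i
    have := congrArg Complex.re (congrFun h i)
    simpa [mulVec, dotProduct, hx, hy] using this
  have him : M *ᵥ y = lam.re • y + lam.im • x := by
    funext i
    have := congrArg Complex.im (congrFun h i)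
    simpa [mulVec, dotProduct, hx, hy] using this
  have key : x ⬝ᵥ M *ᵥ x + y ⬝ᵥ M *ᵥ y = lam.re * (x ⬝ᵥ x + y ⬝ᵥ y) := by
    rw [hre, him]
    simp only [dotProduct_sub, dotProduct_add, dotProduct_smul, smul_eq_mul]
    rw [dotProduct_comm y x]
    ring
  have hle : ∀ z : Fin m → ℝ, z ⬝ᵥ M *ᵥ z ≤ 0 := by
    intro z
    by_cases hz : z = 0
    · simp [hz]
    · exact (hM z hz).le
  have hlt : x ⬝ᵥ M *ᵥ x + y ⬝ᵥ M *ᵥ y < 0 := by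
    by_cases hx0 : x = 0
    · have hy0 : y ≠ 0 := by
        intro hy0
        exact hv (funext fun i => Complex.ext (congrFun hx0 i) (congrFun hy0 i))
      exact add_neg_of_nonpos_of_neg (hle x) (hM y hy0)
    · exact add_neg_of_neg_of_nonpos (hM x hx0) (hle y)
  have hnn : ∀ z : Fin m → ℝ, 0 ≤ z ⬝ᵥ z := fun z =>
    Finset.sum_nonneg fun i _ => mul_self_nonneg _
  rw [key] at hlt
  by_contra hc
  push Not at hc
  exact absurd hlt (not_lt.2 (mul_nonneg hc (add_nonneg (hnn x) (hnn y))))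

theorem wsgd_combination_eigenvalues (α : ℝ) (hα1 : 1 < α) (hα2 : α ≤ 2)
    (m : ℕ) (hm : 1 ≤ m) (A : Matrix (Fin m) (Fin m) ℝ)
    (hA : A = wsgdMatrix (w10 α) m ∨ A = wsgdMatrix (w1m1 α) m)
    (c1 c2 : ℝ) (hc1 : 0 ≤ c1) (hc2 : 0 ≤ c2) (hc : c1 ^ 2 + c2 ^ 2 ≠ 0) :
    ∀ lam : ℂ,
      (∃ v : Fin m → ℂ, v ≠ 0 ∧
        ((c1 • A + c2 • Aᵀ).map Complex.ofReal).mulVec v = lam • v) → lam.re < 0 := by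
  rintro lam ⟨v, hv, h⟩
  refine re_neg_of_form_neg (fun x hx => ?_) hv h
  have hneg := wsgd_form_neg hα1 hα2 hA hx
  have hT : x ⬝ᵥ Aᵀ *ᵥ x = x ⬝ᵥ A *ᵥ x := by
    rw [mulVec_transpose, dotProduct_comm, ← dotProduct_mulVec]
  have hpos : 0 < c1 + c2 := by
    rcases hc1.eq_or_lt with rfl | h1
    · rcases hc2.eq_or_lt with rfl | h2
      · simp at hc
      · linarith
    · linarith
  rw [add_mulVec, dotProduct_add, smul_mulVec, smul_mulVec, dotProduct_smul,
    dotProduct_smul, hT, smul_eq_mul, smul_eq_mul, ← add_mul]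
  exact mul_neg_of_pos_of_neg hpos hneg
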